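/- arXiv:1705.00445 — 2 statements merged into one kernel-verified Lean document; each statement's English description precedes it below -/
import Mathlib

section
/- The map Π_{ζμ} is an involution: Π_{ζμ}∘Π_{ζμ} = id on F. -/
/-!
The composite `T ∘ T` is a ring endomorphism of a fraction field of a polynomial ring over `ℚ`, so
it is the identity as soon as it fixes the eight indeterminates (`ringHom_eq_id`). For `β_0`,
`γ_0`, `ζ_0`, `μ_0` this is immediate. For the variables `z_i`, the key is
that the denominator transforms by inversion: with `s = z_0 + z_2` and `t = z_1 + z_12`,
the numerators of `P_0 + P_2` and `P_1 + P_12` collapse, giving `T s = -ζ_0 ζ_1 / s` and `T t = -ζ_0 ζ_1 / t`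
(`P0_add_P2`, `P1_add_P12`). Hence `T D = 2 (ζ_0 ζ_1)² / (s t)`, and after clearing
denominators `T P_i = z_i` is a polynomial identity.
-/

/-- `F = ℚ(β_0, γ_0, ζ_0, μ_0, z_0, z_1, z_2, z_12)`: the field of rational functions
in eight indeterminates over `ℚ`, realized as the fraction field of the polynomial
ring in eight variables. -/
abbrev F8 : Type := FractionRing (MvPolynomial (Fin 8) ℚ)

/-- The eight indeterminates as elements of `F`; indices `0,…,7` correspond to
`β_0, γ_0, ζ_0, μ_0, z_0, z_1, z_2, z_12` respectively. -/
noncomputable def Xv (i : Fin 8) : F8 :=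
  algebraMap (MvPolynomial (Fin 8) ℚ) F8 (MvPolynomial.X i)

/-- `β_0`. -/
noncomputable def vb0 : F8 := Xv 0
/-- `γ_0`. -/
noncomputable def vg0 : F8 := Xv 1
/-- `ζ_0`. -/
noncomputable def vz0 : F8 := Xv 2
/-- `μ_0`. -/
noncomputable def vm0 : F8 := Xv 3
/-- `z_0`. -/
noncomputable def w0 : F8 := Xv 4
/-- `z_1`. -/
noncomputable def w1 : F8 := Xv 5
/-- `z_2`. -/
noncomputable def w2 : F8 := Xv 6
/-- `z_12`. -/
noncomputable def w12 : F8 := Xv 7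

/-- `β_1 = 1 - β_0`. -/
noncomputable def vb1 : F8 := 1 - vb0
/-- `γ_1 = 1 - γ_0`. -/
noncomputable def vg1 : F8 := 1 - vg0
/-- `ζ_1 = 1 - ζ_0`. -/
noncomputable def vz1 : F8 := 1 - vz0
/-- `μ_1 = 1 - μ_0`. -/
noncomputable def vm1 : F8 := 1 - vm0

/-- `D = 2(z_0+z_2)(z_1+z_12)`. -/
noncomputable def Dd : F8 := 2*(w0+w2)*(w1+w12)

/-- `P_0`, the image of `z_0` under `Π_{ζμ}`. -/
noncomputable def P0 : F8 :=
  -vz0*((vb0-vg1+vz0-vm1)*w0 + (vb0+vg1-vz0-vm1)*w1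
        + (vb1-vg1-vz0+vm0)*w2 + (vb1+vg1-vz0+vm0)*w12)/Dd

/-- `P_1`, the image of `z_1` under `Π_{ζμ}`. -/
noncomputable def P1 : F8 :=
  -vz0*((vb1+vg1-vz0-vm0)*w0 + (vb1-vg1+vz0-vm0)*w1
        + (vb0+vg1-vz0+vm1)*w2 + (vb0-vg1-vz0+vm1)*w12)/Dd

/-- `P_2`, the image of `z_2` under `Π_{ζμ}`. -/
noncomputable def P2 : F8 :=
  -vz0*((vb1-vg0-vz0+vm1)*w0 + (vb1+vg0-vz0+vm1)*w1
        + (vb0-vg0+vz0-vm0)*w2 + (vb0+vg0-vz0-vm0)*w12)/Dd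

/-- `P_12`, the image of `z_12` under `Π_{ζμ}`. -/
noncomputable def P12 : F8 :=
  -vz0*((vb0+vg0-vz0+vm0)*w0 + (vb0-vg0-vz0+vm0)*w1
        + (vb1+vg0-vz0-vm1)*w2 + (vb1-vg0+vz0-vm1)*w12)/Dd

/-- A ring endomorphism of `F` fixing the eight indeterminates is the identity; it fixes `ℚ`
automatically. -/
lemma ringHom_eq_id (S : F8 →+* F8) (h : ∀ i, S (Xv i) = Xv i) : S = RingHom.id F8 := by
  apply IsLocalization.ringHom_ext (nonZeroDivisors (MvPolynomial (Fin 8) ℚ))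
  apply MvPolynomial.ringHom_ext'
  · exact Subsingleton.elim _ _
  · exact h

/-- An element of `F` coming from a polynomial is nonzero if the polynomial is nonzero at some
rational point. -/
lemma algebraMap_ne_zero_of_eval (p : MvPolynomial (Fin 8) ℚ) (x : Fin 8 → ℚ)
    (h : MvPolynomial.eval x p ≠ 0) : algebraMap (MvPolynomial (Fin 8) ℚ) F8 p ≠ 0 := by
  intro h_map
  have hp : p = 0 := (IsFractionRing.injective (MvPolynomial (Fin 8) ℚ) F8) (by simpa using h_map)
  exact h (by simp [hp])

lemma vz0_ne_zero : vz0 ≠ 0 :=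
  algebraMap_ne_zero_of_eval (MvPolynomial.X 2) (fun _ => 1) (by simp)

lemma vz1_ne_zero : vz1 ≠ 0 := by
  have h := algebraMap_ne_zero_of_eval (1 - MvPolynomial.X 2) (fun _ => 0) (by simp)
  rwa [map_sub, map_one] at h

lemma w0_add_w2_ne_zero : w0 + w2 ≠ 0 := by
  have h := algebraMap_ne_zero_of_eval (MvPolynomial.X 4 + MvPolynomial.X 6) (fun _ => 1)
    (by norm_num)
  rwa [map_add] at h

lemma w1_add_w12_ne_zero : w1 + w12 ≠ 0 := by
  have h := algebraMap_ne_zero_of_eval (MvPolynomial.X 5 + MvPolynomial.X 7) (fun _ => 1)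
    (by norm_num)
  rwa [map_add] at h

lemma P0_add_P2 : P0 + P2 = -(vz0 * vz1) / (w0 + w2) := by
  have hs := w0_add_w2_ne_zero
  have ht := w1_add_w12_ne_zero
  unfold P0 P2 Dd vb1 vg1 vm1 vz1
  field_simp
  ring

lemma P1_add_P12 : P1 + P12 = -(vz0 * vz1) / (w1 + w12) := by
  have hs := w0_add_w2_ne_zero
  have ht := w1_add_w12_ne_zero
  unfold P1 P12 Dd vb1 vg1 vm1 vz1
  field_simp
  ring

/-- the map `Π_{ζμ}` — i.e. any ring homomorphism `F → F` acting on the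
generators by `ζ_0 ↦ ζ_1 = 1-ζ_0`, `μ_0 ↦ μ_1 = 1-μ_0`, `z_0 ↦ P_0`, `z_1 ↦ P_1`,
`z_2 ↦ P_2`, `z_12 ↦ P_12`, fixing `β_0` and `γ_0` — is an involution:
`Π_{ζμ} ∘ Π_{ζμ} = id`. -/
theorem statement15 (T : F8 →+* F8)
    (hb : T vb0 = vb0) (hg : T vg0 = vg0) (hz : T vz0 = vz1) (hm : T vm0 = vm1)
    (h0 : T w0 = P0) (h1 : T w1 = P1) (h2 : T w2 = P2) (h12 : T w12 = P12) :
    T.comp T = RingHom.id F8 := by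
  have hs := w0_add_w2_ne_zero
  have ht := w1_add_w12_ne_zero
  have hz0 := vz0_ne_zero
  have hz1 := vz1_ne_zero
  have hb1 : T vb1 = vb1 := by simp [vb1, hb]
  have hg1 : T vg1 = vg1 := by simp [vg1, hg]
  have hzz : T vz1 = vz0 := by simp [vz1, hz]
  have hmm : T vm1 = vm0 := by simp [vm1, hm]
  have hD : T Dd = 2 * (vz0 * vz1) ^ 2 / ((w0 + w2) * (w1 + w12)) := by
    simp only [Dd, map_mul, map_add, map_ofNat, h0, h1, h2, h12, P0_add_P2, P1_add_P12]
    field_simp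
  have hD0 : 2 * (vz0 * vz1) ^ 2 / ((w0 + w2) * (w1 + w12)) ≠ 0 :=
    div_ne_zero (mul_ne_zero two_ne_zero (pow_ne_zero 2 (mul_ne_zero hz0 hz1)))
      (mul_ne_zero hs ht)
  have hP0 : T P0 = w0 := by
    rw [P0, map_div₀, hD]
    simp only [map_mul, map_neg, map_add, map_sub, hb, hz, hm, hb1, hg1, hmm,
      h0, h1, h2, h12]
    rw [div_eq_iff hD0]
    unfold P0 P1 P2 P12 Dd
    field_simp
    unfold vb1 vg1 vm1 vz1
    ring
  have hP1 : T P1 = w1 := by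
    rw [P1, map_div₀, hD]
    simp only [map_mul, map_neg, map_add, map_sub, hb, hz, hm, hb1, hg1, hmm,
      h0, h1, h2, h12]
    rw [div_eq_iff hD0]
    unfold P0 P1 P2 P12 Dd
    field_simp
    unfold vb1 vg1 vm1 vz1
    ring
  have hP2 : T P2 = w2 := by
    rw [P2, map_div₀, hD]
    simp only [map_mul, map_neg, map_add, map_sub, hb, hg, hz, hm, hb1, hmm,
      h0, h1, h2, h12]
    rw [div_eq_iff hD0]
    unfold P0 P1 P2 P12 Dd
    field_simp
    unfold vb1 vg1 vm1 vz1
    ring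
  have hP12 : T P12 = w12 := by
    rw [P12, map_div₀, hD]
    simp only [map_mul, map_neg, map_add, map_sub, hb, hg, hz, hm, hb1, hmm,
      h0, h1, h2, h12]
    rw [div_eq_iff hD0]
    unfold P0 P1 P2 P12 Dd
    field_simp
    unfold vb1 vg1 vm1 vz1
    ring
  apply ringHom_eq_id
  intro i
  fin_cases i
  · exact (congrArg T hb).trans hb
  · exact (congrArg T hg).trans hg
  · exact (congrArg T hz).trans hzz
  · exact (congrArg T hm).trans hmm
  · exact (congrArg T h0).trans hP0
  · exact (congrArg T h1).trans hP1
  · exact (congrArg T h2).trans hP2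
  · exact (congrArg T h12).trans hP12
end

section
/- The maps S_{β0} and S_{γ0} commute: S_{β0}∘S_{γ0} = S_{γ0}∘S_{β0} on F (equivalently, since both are involutions, (S_{β0}∘S_{γ0})^2 = id). -/
/-- `R_0`, the image of `z_0` under `S_{β0}`. -/
noncomputable def R0 : F8 :=
  (2*vb0*w1*w12 - (vb0+vg0+vz0-vm0)*w0*w1 + (vb0-vg0+vz0+vm0)*w0*w12) /
  (2*vb0*w0 + (vb0-vg0-vz0+vm0)*w1 - (vb0+vg0-vz0-vm0)*w12)

/-- `R_2`, the image of `z_2` under `S_{β0}`. -/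
noncomputable def R2 : F8 :=
  (2*vb0*w1*w12 + (vb0+vg0+vz0-vm0)*w1*w2 - (vb0-vg0+vz0+vm0)*w2*w12) /
  (2*vb0*w2 - (vb0-vg0-vz0+vm0)*w1 + (vb0+vg0-vz0-vm0)*w12)

/-- `Q_0`, the image of `z_0` under `S_{γ0}`. -/
noncomputable def Q0 : F8 :=
  (2*vg0*w2*w12 - (vb0-vg0-vz0-vm0)*w0*w12 - (vb0+vg0+vz0-vm0)*w0*w2) /
  (2*vg0*w0 - (vb0+vg0-vz0-vm0)*w12 - (vb0-vg0+vz0-vm0)*w2)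

/-- `Q_1`, the image of `z_1` under `S_{γ0}`. -/
noncomputable def Q1 : F8 :=
  (2*vg0*w2*w12 + (vb0-vg0-vz0-vm0)*w1*w12 + (vb0+vg0+vz0-vm0)*w1*w2) /
  (2*vg0*w1 + (vb0+vg0-vz0-vm0)*w12 + (vb0-vg0+vz0-vm0)*w2)

lemma F8_hom_ext (f g : F8 →+* F8) (h : ∀ i, f (Xv i) = g (Xv i)) : f = g := by
  apply IsLocalization.ringHom_ext (nonZeroDivisors (MvPolynomial (Fin 8) ℚ))
  apply MvPolynomial.ringHom_ext
  · intro r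
    exact congrFun (congrArg DFunLike.coe (Subsingleton.elim
      ((f.comp (algebraMap (MvPolynomial (Fin 8) ℚ) F8)).comp MvPolynomial.C)
      ((g.comp (algebraMap (MvPolynomial (Fin 8) ℚ) F8)).comp MvPolynomial.C))) r
  · exact h

/-- A polynomial with a nonzero value at some rational point is nonzero in `F`. -/
lemma F8_ne_zero (p : MvPolynomial (Fin 8) ℚ) (v : Fin 8 → ℚ)
    (h : MvPolynomial.eval v p ≠ 0) : algebraMap (MvPolynomial (Fin 8) ℚ) F8 p ≠ 0 := by
  intro h0
  have hp : p = 0 := IsFractionRing.injective (MvPolynomial (Fin 8) ℚ) F8 (by rw [h0, map_zero])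
  exact h (by rw [hp, map_zero])

lemma F8_two : algebraMap (MvPolynomial (Fin 8) ℚ) F8 2 = 2 := map_ofNat _ 2

open MvPolynomial in
lemma R0_den_ne_zero : 2*vb0*w0 + (vb0-vg0-vz0+vm0)*w1 - (vb0+vg0-vz0-vm0)*w12 ≠ 0 := by
  have := F8_ne_zero (2*X 0*X 4 + (X 0-X 1-X 2+X 3)*X 5 - (X 0+X 1-X 2-X 3)*X 7)
    ![1, 0, 0, 0, 1, 0, 0, 0] (by simp)
  simpa [vb0, vg0, vz0, vm0, w0, w1, w12, Xv, F8_two] using this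

open MvPolynomial in
lemma R2_den_ne_zero : 2*vb0*w2 - (vb0-vg0-vz0+vm0)*w1 + (vb0+vg0-vz0-vm0)*w12 ≠ 0 := by
  have := F8_ne_zero (2*X 0*X 6 - (X 0-X 1-X 2+X 3)*X 5 + (X 0+X 1-X 2-X 3)*X 7)
    ![1, 0, 0, 0, 0, 0, 1, 0] (by simp)
  simpa [vb0, vg0, vz0, vm0, w2, w1, w12, Xv, F8_two] using this

open MvPolynomial in
lemma Q0_den_ne_zero : 2*vg0*w0 - (vb0+vg0-vz0-vm0)*w12 - (vb0-vg0+vz0-vm0)*w2 ≠ 0 := by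
  have := F8_ne_zero (2*X 1*X 4 - (X 0+X 1-X 2-X 3)*X 7 - (X 0-X 1+X 2-X 3)*X 6)
    ![0, 1, 0, 0, 1, 0, 0, 0] (by simp)
  simpa [vb0, vg0, vz0, vm0, w0, w2, w12, Xv, F8_two] using this

open MvPolynomial in
lemma Q1_den_ne_zero : 2*vg0*w1 + (vb0+vg0-vz0-vm0)*w12 + (vb0-vg0+vz0-vm0)*w2 ≠ 0 := by
  have := F8_ne_zero (2*X 1*X 5 + (X 0+X 1-X 2-X 3)*X 7 + (X 0-X 1+X 2-X 3)*X 6)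
    ![0, 1, 0, 0, 0, 1, 0, 0] (by simp)
  simpa [vb0, vg0, vz0, vm0, w1, w2, w12, Xv, F8_two] using this

/-- Commutation on `z_1`: substituting `β_0 ↦ -β_0`, `z_2 ↦ R_2` leaves `Q_1` unchanged. -/
lemma Q1_invariant {K : Type*} [Field K] (b g z m c d e r : K)
    (h2 : 2*b*d - (b-g-z+m)*c + (b+g-z-m)*e ≠ 0)
    (hr : r = (2*b*c*e + (b+g+z-m)*c*d - (b-g+z+m)*d*e) /
      (2*b*d - (b-g-z+m)*c + (b+g-z-m)*e))
    (h1 : 2*g*c + (b+g-z-m)*e + (b-g+z-m)*d ≠ 0)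
    (hS : 2*g*c + (-b+g-z-m)*e + (-b-g+z-m)*r ≠ 0) :
    (2*g*r*e + (-b-g-z-m)*c*e + (-b+g+z-m)*c*r) /
      (2*g*c + (-b+g-z-m)*e + (-b-g+z-m)*r) =
    (2*g*d*e + (b-g-z-m)*c*e + (b+g+z-m)*c*d) /
      (2*g*c + (b+g-z-m)*e + (b-g+z-m)*d) := by
  rw [div_eq_div_iff hS h1]
  generalize hD2 : 2*b*d - (b-g-z+m)*c + (b+g-z-m)*e = D2 at *
  subst hr
  field_simp
  simp only [← hD2]
  ring

/-- Commutation on `z_2`: substituting `γ_0 ↦ -γ_0`, `z_1 ↦ Q_1` leaves `R_2` unchanged. -/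
lemma R2_invariant {K : Type*} [Field K] (b g z m c d e q : K)
    (h1 : 2*g*c + (b+g-z-m)*e + (b-g+z-m)*d ≠ 0)
    (hq : q = (2*g*d*e + (b-g-z-m)*c*e + (b+g+z-m)*c*d) /
      (2*g*c + (b+g-z-m)*e + (b-g+z-m)*d))
    (h2 : 2*b*d - (b-g-z+m)*c + (b+g-z-m)*e ≠ 0)
    (hT : 2*b*d - (b+g-z+m)*q + (b-g-z-m)*e ≠ 0) :
    (2*b*q*e + (b-g+z-m)*q*d - (b+g+z+m)*d*e) /
      (2*b*d - (b+g-z+m)*q + (b-g-z-m)*e) =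
    (2*b*c*e + (b+g+z-m)*c*d - (b-g+z+m)*d*e) /
      (2*b*d - (b-g-z+m)*c + (b+g-z-m)*e) := by
  rw [div_eq_div_iff hT h2]
  generalize hD1 : 2*g*c + (b+g-z-m)*e + (b-g+z-m)*d = D1 at *
  subst hq
  field_simp
  simp only [← hD1]
  ring

/-- The numerator of the common value of `S (T z_0)` and `T (S z_0)`, as a
polynomial in `β_0, γ_0, ζ_0, μ_0, z_0, z_1, z_2, z_12`, here called `b, g, z, m, a, c, d, e`. -/
def commNum {K : Type*} [Field K] (b g z m a c d e : K) : K :=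
  ((m+z)^2-(b+g)^2)*a*e^2 + ((m-g)^2-(z+b)^2)*a*d*e + ((m-b)^2-(z+g)^2)*a*c*e
    + (b+g+z-m)^2*a*c*d - 2*g*(b+g-z-m)*d*e^2 - 2*(b+g)*(b+g+z-m)*c*d*e - 2*b*(b+g-z-m)*c*e^2

/-- The denominator of the common value of `S (T z_0)` and `T (S z_0)`, with the
variables named as in `commNum`. -/
def commDen {K : Type*} [Field K] (b g z m a c d e : K) : K :=
  (b+g-z-m)^2*e^2 + ((m-b)^2-(z-g)^2)*d*e + ((m-g)^2-(z-b)^2)*c*e + ((m-z)^2-(b+g)^2)*c*d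
    - 2*(b+g)*(b+g-z-m)*a*e - 2*g*(b+g+z-m)*a*c - 2*b*(b+g+z-m)*a*d

/-- The value of `S (T z_0)`: substituting `β_0 ↦ -β_0`, `z_0 ↦ R_0`, `z_2 ↦ R_2` in `Q_0`, a linear
factor in `z_1, z_12` cancels. -/
lemma Q0_subst {K : Type*} [Field K] (b g z m a c d e r0 r2 : K)
    (hR0 : 2*b*a + (b-g-z+m)*c - (b+g-z-m)*e ≠ 0)
    (hR2 : 2*b*d - (b-g-z+m)*c + (b+g-z-m)*e ≠ 0)
    (hr0 : r0 = (2*b*c*e - (b+g+z-m)*a*c + (b-g+z+m)*a*e) /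
      (2*b*a + (b-g-z+m)*c - (b+g-z-m)*e))
    (hr2 : r2 = (2*b*c*e + (b+g+z-m)*c*d - (b-g+z+m)*d*e) /
      (2*b*d - (b-g-z+m)*c + (b+g-z-m)*e))
    (hS : 2*g*r0 - (-b+g-z-m)*e - (-b-g+z-m)*r2 ≠ 0) :
    (2*g*r2*e - (-b-g-z-m)*r0*e - (-b+g+z-m)*r0*r2) /
      (2*g*r0 - (-b+g-z-m)*e - (-b-g+z-m)*r2) =
    commNum b g z m a c d e / commDen b g z m a c d e := by
  generalize hA : 2*b*a + (b-g-z+m)*c - (b+g-z-m)*e = A at *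
  generalize hB : 2*b*d - (b-g-z+m)*c + (b+g-z-m)*e = B at *
  have hden : 2*g*r0 - (-b+g-z-m)*e - (-b-g+z-m)*r2 =
      (-(b-g-z+m)*c - (b-g+z+m)*e) / (A*B) * commDen b g z m a c d e := by
    subst hr0 hr2
    field_simp
    simp only [← hA, ← hB, commDen]
    ring
  have hnum : 2*g*r2*e - (-b-g-z-m)*r0*e - (-b+g+z-m)*r0*r2 =
      (-(b-g-z+m)*c - (b-g+z+m)*e) / (A*B) * commNum b g z m a c d e := by
    subst hr0 hr2
    field_simp
    simp only [← hA, ← hB, commNum]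
    ring
  rw [hden] at hS
  rw [hden, hnum, mul_div_mul_left _ _ (left_ne_zero_of_mul hS)]

/-- The value of `T (S z_0)`: substituting `γ_0 ↦ -γ_0`, `z_0 ↦ Q_0`, `z_1 ↦ Q_1` in `R_0`, a linear
factor in `z_2, z_12` cancels. -/
lemma R0_subst {K : Type*} [Field K] (b g z m a c d e q0 q1 : K)
    (hQ0 : 2*g*a - (b+g-z-m)*e - (b-g+z-m)*d ≠ 0)
    (hQ1 : 2*g*c + (b+g-z-m)*e + (b-g+z-m)*d ≠ 0)
    (hq0 : q0 = (2*g*d*e - (b-g-z-m)*a*e - (b+g+z-m)*a*d) /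
      (2*g*a - (b+g-z-m)*e - (b-g+z-m)*d))
    (hq1 : q1 = (2*g*d*e + (b-g-z-m)*c*e + (b+g+z-m)*c*d) /
      (2*g*c + (b+g-z-m)*e + (b-g+z-m)*d))
    (hT : 2*b*q0 + (b+g-z+m)*q1 - (b-g-z-m)*e ≠ 0) :
    (2*b*q1*e - (b-g+z-m)*q0*q1 + (b+g+z+m)*q0*e) /
      (2*b*q0 + (b+g-z+m)*q1 - (b-g-z-m)*e) =
    commNum b g z m a c d e / commDen b g z m a c d e := by
  generalize hA : 2*g*a - (b+g-z-m)*e - (b-g+z-m)*d = A at *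
  generalize hB : 2*g*c + (b+g-z-m)*e + (b-g+z-m)*d = B at *
  have hden : 2*b*q0 + (b+g-z+m)*q1 - (b-g-z-m)*e =
      ((b-g-z-m)*e + (b-g+z-m)*d) / (A*B) * commDen b g z m a c d e := by
    subst hq0 hq1
    field_simp
    simp only [← hA, ← hB, commDen]
    ring
  have hnum : 2*b*q1*e - (b-g+z-m)*q0*q1 + (b+g+z+m)*q0*e =
      ((b-g-z-m)*e + (b-g+z-m)*d) / (A*B) * commNum b g z m a c d e := by
    subst hq0 hq1
    field_simp
    simp only [← hA, ← hB, commNum]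
    ring
  rw [hden] at hT
  rw [hden, hnum, mul_div_mul_left _ _ (left_ne_zero_of_mul hT)]

/-- the maps `S_{β0}` and `S_{γ0}` commute: for any ring homomorphisms
`S, T : F → F` with `S` acting on the generators by `β_0 ↦ -β_0`, `z_0 ↦ R_0`, `z_2 ↦ R_2`
(fixing `γ_0, ζ_0, μ_0, z_1, z_12`) and `T` acting by `γ_0 ↦ -γ_0`, `z_0 ↦ Q_0`,
`z_1 ↦ Q_1` (fixing `β_0, ζ_0, μ_0, z_2, z_12`), one has `S ∘ T = T ∘ S`. -/
theorem statement16 (S T : F8 →+* F8)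
    (hSb : S vb0 = -vb0) (hSg : S vg0 = vg0) (hSz : S vz0 = vz0) (hSm : S vm0 = vm0)
    (hS0 : S w0 = R0) (hS1 : S w1 = w1) (hS2 : S w2 = R2) (hS12 : S w12 = w12)
    (hTg : T vg0 = -vg0) (hTb : T vb0 = vb0) (hTz : T vz0 = vz0) (hTm : T vm0 = vm0)
    (hT0 : T w0 = Q0) (hT1 : T w1 = Q1) (hT2 : T w2 = w2) (hT12 : T w12 = w12) :
    S.comp T = T.comp S := by
  -- The images of nonzero denominators under the injective maps `S` and `T`.
  have hSQ0 := (map_ne_zero S).2 Q0_den_ne_zero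
  have hSQ1 := (map_ne_zero S).2 Q1_den_ne_zero
  have hTR0 := (map_ne_zero T).2 R0_den_ne_zero
  have hTR2 := (map_ne_zero T).2 R2_den_ne_zero
  simp only [map_add, map_sub, map_mul, map_ofNat, hSb, hSg, hSz, hSm, hS0, hS1, hS2, hS12]
    at hSQ0 hSQ1
  simp only [map_add, map_sub, map_mul, map_ofNat, hTb, hTg, hTz, hTm, hT0, hT1, hT2, hT12,
    sub_neg_eq_add, ← sub_eq_add_neg] at hTR0 hTR2
  have e0 : S (T w0) = T (S w0) := by
    rw [hT0, hS0]
    have key := (Q0_subst vb0 vg0 vz0 vm0 w0 w1 w2 w12 R0 R2 R0_den_ne_zero R2_den_ne_zero rfl rfl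
      hSQ0).trans (R0_subst vb0 vg0 vz0 vm0 w0 w1 w2 w12 Q0 Q1 Q0_den_ne_zero Q1_den_ne_zero
      rfl rfl hTR0).symm
    conv_lhs => rw [Q0]
    conv_rhs => rw [R0]
    simpa only [map_div₀, map_add, map_sub, map_mul, map_ofNat, hSb, hSg, hSz, hSm, hS0, hS1, hS2,
      hS12, hTb, hTg, hTz, hTm, hT0, hT1, hT2, hT12, sub_neg_eq_add, ← sub_eq_add_neg] using key
  have e1 : S (T w1) = T (S w1) := by
    rw [hS1, hT1]
    have key := Q1_invariant vb0 vg0 vz0 vm0 w1 w2 w12 R2 R2_den_ne_zero rfl Q1_den_ne_zero hSQ1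
    rw [Q1]
    simpa only [map_div₀, map_add, map_sub, map_mul, map_ofNat, hSb, hSg, hSz, hSm, hS1, hS2,
      hS12] using key
  have e2 : S (T w2) = T (S w2) := by
    rw [hT2, hS2]
    have key := R2_invariant vb0 vg0 vz0 vm0 w1 w2 w12 Q1 Q1_den_ne_zero rfl R2_den_ne_zero hTR2
    rw [R2]
    simpa only [map_div₀, map_add, map_sub, map_mul, map_ofNat, hTb, hTg, hTz, hTm, hT1, hT2,
      hT12, sub_neg_eq_add, ← sub_eq_add_neg] using key.symm
  apply F8_hom_ext
  intro i
  simp only [RingHom.comp_apply]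
  fin_cases i
  · change S (T vb0) = T (S vb0)
    rw [hTb, hSb, map_neg, hTb]
  · change S (T vg0) = T (S vg0)
    rw [hSg, hTg, map_neg, hSg]
  · change S (T vz0) = T (S vz0)
    rw [hSz, hTz, hSz]
  · change S (T vm0) = T (S vm0)
    rw [hSm, hTm, hSm]
  · exact e0
  · exact e1
  · exact e2
  · change S (T w12) = T (S w12)
    rw [hS12, hT12, hS12]
end
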